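/- Let d = 2 and assume the coordinate ordering condition, i.e. λ(i^{(2)}) < λ(i^{(1)}) for every i = (i_1,i_2) ∈ I_2. For a probability vector p on I_2 let q_p be the probability vector on I_1 given by q_p(i) = Σ_{j : (i,j)∈I_2} p(i,j), and note that χ_1(q_p) := −Σ_{i∈I_1} q_p(i)·log λ(i) equals χ_1(p). Then max_{p∈P(I_2)} [ H(p)/χ_2(p) + (1 − χ_1(p)/χ_2(p))·H(q_p)/χ_1(q_p) ] = s_2 if and only if Σ_{j=1}^{N(i)} λ(i,j)^{s_2−s_1} = 1 for every i ∈ I_1 (the uniform fibre condition). Here the left-hand side is the Gatzouras–Lalley variational formula for the Hausdorff dimension of the carpet, while s_2 is its box dimension. -/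

import Mathlib

open Real Finset Filter

noncomputable section

/-- Index sets of a Gatzouras–Lalley structure. -/
def glIdx (Nf : List ℕ → ℕ) : ℕ → Finset (List ℕ)
  | 0 => {[]}
  | n + 1 => (glIdx Nf n).biUnion fun u =>
      (Finset.range (Nf u)).image fun j => u ++ [j + 1]

/-- Entropy of a vector `p` on index set `I`. -/
def glEnt (I : Finset (List ℕ)) (p : List ℕ → ℝ) : ℝ :=
  -∑ i ∈ I, p i * Real.log (p i)

/-- Lyapunov exponent `χ_ℓ(p)` for `p` on index set `I`. -/
def glLyap (lam : List ℕ → ℝ) (I : Finset (List ℕ)) (ℓ : ℕ) (p : List ℕ → ℝ) : ℝ :=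
  -∑ i ∈ I, p i * Real.log (lam (i.take ℓ))

def IsProbVec (I : Finset (List ℕ)) (p : List ℕ → ℝ) : Prop :=
  (∀ i ∈ I, 0 ≤ p i) ∧ ∑ i ∈ I, p i = 1

/-- `glCaux d χ k = C^{(d)}_{d-k}`, defined by downward recursion. -/
def glCaux (d : ℕ) (chi : ℕ → ℕ → ℝ) : ℕ → ℝ
  | k => (1 - ∑ j ∈ (Finset.range k).attach,
        glCaux d chi j.1 * chi (d - k) (d - j.1)) / chi (d - k) (d - k)
decreasing_by exact Finset.mem_range.mp j.2

/-- The coefficient `C_n^{(d)}(P)`. -/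
def glC (d : ℕ) (lam : List ℕ → ℝ) (Nf : List ℕ → ℕ) (P : ℕ → List ℕ → ℝ) (n : ℕ) : ℝ :=
  glCaux d (fun a m => glLyap lam (glIdx Nf m) a (P m)) (d - n)

/-- Smallest number of sets of diameter at most `δ` needed to cover `Λ`. -/
def coverNum {E : Type*} [EMetricSpace E] (Λ : Set E) (δ : ℝ) : ℕ :=
  sInf {m : ℕ | ∃ U : Fin m → Set E,
    (∀ k, EMetric.diam (U k) ≤ ENNReal.ofReal δ) ∧ Λ ⊆ ⋃ k, U k}

/-- The affine map `S_i` of a Gatzouras–Lalley system. -/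
def glMap (d : ℕ) (lam t : List ℕ → ℝ) (i : List ℕ) (x : EuclideanSpace ℝ (Fin d)) :
    EuclideanSpace ℝ (Fin d) :=
  WithLp.toLp 2 fun k : Fin d => lam (i.take ((k : ℕ) + 1)) * x k + t (i.take ((k : ℕ) + 1))

def openCube (d : ℕ) : Set (EuclideanSpace ℝ (Fin d)) := {x | ∀ k, x k ∈ Set.Ioo (0:ℝ) 1}

def closedCube (d : ℕ) : Set (EuclideanSpace ℝ (Fin d)) := {x | ∀ k, x k ∈ Set.Icc (0:ℝ) 1}


/-- The marginal `q_p` on `I_1` of a probability vector `p` on `I_2`. -/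
def glMarg (Nf : List ℕ → ℕ) (p : List ℕ → ℝ) (u : List ℕ) : ℝ :=
  ∑ v ∈ (glIdx Nf 2).filter (fun v => v.take 1 = u), p v

theorem gl_pt (p w : ℝ) (hp : 0 ≤ p) (hw : 0 < w) :
    p * Real.log w - p * Real.log p ≤ w - p ∧
      (p * Real.log w - p * Real.log p = w - p → p = w) := by
  rcases hp.eq_or_lt with h | h
  · subst h
    constructor
    · simp; exact hw.le
    · intro h; simp at h; exact h
  · have e : p * Real.log w - p * Real.log p = p * Real.log (w / p) := by
      rw [Real.log_div hw.ne' h.ne']; ring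
    have e2 : w - p = p * (w / p - 1) := by field_simp
    rw [e, e2]
    constructor
    · exact mul_le_mul_of_nonneg_left (Real.log_le_sub_one_of_pos (by positivity)) hp
    · intro h3
      by_contra hne
      have : w / p ≠ 1 := by
        intro h4
        rw [div_eq_one_iff_eq h.ne'] at h4
        exact hne h4.symm
      have h5 := Real.log_lt_sub_one_of_pos (by positivity) this
      have h6 := mul_left_cancel₀ h.ne' h3
      linarith

theorem gl_gibbs (I : Finset (List ℕ)) (p w : List ℕ → ℝ) (hp : ∀ i ∈ I, 0 ≤ p i)
    (hp1 : ∑ i ∈ I, p i = 1) (hw : ∀ i ∈ I, 0 < w i) (hw1 : ∑ i ∈ I, w i = 1) :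
    glEnt I p ≤ -∑ i ∈ I, p i * Real.log (w i) ∧
      (glEnt I p = -∑ i ∈ I, p i * Real.log (w i) → ∀ i ∈ I, p i = w i) := by
  have hle : ∀ i ∈ I, p i * Real.log (w i) - p i * Real.log (p i) ≤ w i - p i :=
    fun i hi => (gl_pt _ _ (hp i hi) (hw i hi)).1
  have e : ∑ i ∈ I, (w i - p i) = 0 := by rw [Finset.sum_sub_distrib, hp1, hw1]; ring
  have e2 : ∑ i ∈ I, (p i * Real.log (w i) - p i * Real.log (p i)) =
    ∑ i ∈ I, p i * Real.log (w i) - ∑ i ∈ I, p i * Real.log (p i) := Finset.sum_sub_distrib ..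
  have h := Finset.sum_le_sum hle
  unfold glEnt
  constructor
  · linarith
  · intro h2 i hi
    have h3 : ∑ i ∈ I, (p i * Real.log (w i) - p i * Real.log (p i)) = ∑ i ∈ I, (w i - p i) := by
      linarith
    exact (gl_pt _ _ (hp i hi) (hw i hi)).2 ((Finset.sum_eq_sum_iff_of_le hle).1 h3 i hi)

theorem gl_idx1 (Nf : List ℕ → ℕ) (u : List ℕ) (hu : u ∈ glIdx Nf 1) : u.take 1 = u := by
  simp only [glIdx, Finset.mem_biUnion, Finset.mem_image, Finset.mem_singleton] at hu
  obtain ⟨_, rfl, j, _, rfl⟩ := hu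
  rfl

theorem gl_idx2 (Nf : List ℕ → ℕ) (v : List ℕ) (hv : v ∈ glIdx Nf 2) :
    v.take 1 ∈ glIdx Nf 1 ∧ v.take 2 = v := by
  rw [glIdx, Finset.mem_biUnion] at hv
  obtain ⟨u, hu, hv⟩ := hv
  rw [Finset.mem_image] at hv
  obtain ⟨j, _, rfl⟩ := hv
  have hu' := hu
  simp only [glIdx, Finset.mem_biUnion, Finset.mem_image, Finset.mem_singleton] at hu
  obtain ⟨_, rfl, k, _, rfl⟩ := hu
  exact ⟨hu', rfl⟩

theorem gl_marg_sum (Nf : List ℕ → ℕ) (p g : List ℕ → ℝ) :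
    ∑ u ∈ glIdx Nf 1, glMarg Nf p u * g u = ∑ v ∈ glIdx Nf 2, p v * g (v.take 1) := by
  rw [← Finset.sum_fiberwise_of_maps_to (fun v hv => (gl_idx2 Nf v hv).1)]
  refine Finset.sum_congr rfl fun u _ => ?_
  rw [glMarg, Finset.sum_mul]
  refine Finset.sum_congr rfl fun v hv => ?_
  rw [(Finset.mem_filter.1 hv).2]

/-- The objective functional. -/
def glF (Nf : List ℕ → ℕ) (lam p : List ℕ → ℝ) : ℝ :=
  glEnt (glIdx Nf 2) p / glLyap lam (glIdx Nf 2) 2 p +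
          (1 - glLyap lam (glIdx Nf 2) 1 p / glLyap lam (glIdx Nf 2) 2 p) *
            (glEnt (glIdx Nf 1) (glMarg Nf p) /
              glLyap lam (glIdx Nf 1) 1 (glMarg Nf p))

theorem gl_marg_congr (Nf : List ℕ → ℕ) (p q : List ℕ → ℝ)
    (h : ∀ i ∈ glIdx Nf 2, p i = q i) : glMarg Nf p = glMarg Nf q := by
  funext u
  exact Finset.sum_congr rfl fun v hv => h v (Finset.mem_filter.1 hv).1

theorem glF_congr (Nf : List ℕ → ℕ) (lam p q : List ℕ → ℝ)
    (h : ∀ i ∈ glIdx Nf 2, p i = q i) : glF Nf lam p = glF Nf lam q := by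
  have h2 : glEnt (glIdx Nf 2) p = glEnt (glIdx Nf 2) q := by
    unfold glEnt
    rw [Finset.sum_congr rfl fun v hv => by rw [h v hv]]
  have h3 : ∀ l, glLyap lam (glIdx Nf 2) l p = glLyap lam (glIdx Nf 2) l q := by
    intro l
    unfold glLyap
    rw [Finset.sum_congr rfl fun v hv => by rw [h v hv]]
  unfold glF
  rw [h2, h3, h3, gl_marg_congr Nf p q h]

theorem gl_lyap_pos (lam : List ℕ → ℝ) (I : Finset (List ℕ)) (l : ℕ) (p : List ℕ → ℝ)
    (hp : IsProbVec I p) (h : ∀ i ∈ I, lam (i.take l) ∈ Set.Ioo (0:ℝ) 1) :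
    0 < glLyap lam I l p := by
  unfold glLyap
  rw [← Finset.sum_neg_distrib]
  have hlog : ∀ i ∈ I, Real.log (lam (i.take l)) < 0 := fun i hi =>
    Real.log_neg (h i hi).1 (h i hi).2
  obtain ⟨i, hi, hpi⟩ : ∃ i ∈ I, 0 < p i := by
    by_contra! hc
    have := Finset.sum_nonpos hc
    linarith [hp.2]
  refine Finset.sum_pos' (fun i hi => ?_) ⟨i, hi, ?_⟩
  · nlinarith [hp.1 i hi, hlog i hi]
  · nlinarith [hlog i hi]

theorem gl_lyap_lt (lam : List ℕ → ℝ) (I : Finset (List ℕ)) (p : List ℕ → ℝ)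
    (hp : IsProbVec I p) (h2 : ∀ i ∈ I, 0 < lam (i.take 2))
    (h : ∀ i ∈ I, lam (i.take 2) < lam (i.take 1)) :
    glLyap lam I 1 p < glLyap lam I 2 p := by
  unfold glLyap
  have hlog : ∀ i ∈ I, Real.log (lam (i.take 2)) < Real.log (lam (i.take 1)) := fun i hi =>
    Real.log_lt_log (h2 i hi) (h i hi)
  obtain ⟨i, hi, hpi⟩ : ∃ i ∈ I, 0 < p i := by
    by_contra! hc
    have := Finset.sum_nonpos hc
    linarith [hp.2]
  refine neg_lt_neg (Finset.sum_lt_sum (fun i hi => ?_) ⟨i, hi, ?_⟩)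
  · exact mul_le_mul_of_nonneg_left (hlog i hi).le (hp.1 i hi)
  · exact mul_lt_mul_of_pos_left (hlog i hi) hpi

theorem gl_lyap_marg (Nf : List ℕ → ℕ) (lam p : List ℕ → ℝ) :
    glLyap lam (glIdx Nf 1) 1 (glMarg Nf p) = glLyap lam (glIdx Nf 2) 1 p := by
  unfold glLyap
  rw [gl_marg_sum Nf p (fun u => Real.log (lam (u.take 1)))]
  simp [List.take_take]

theorem gl_marg_prob (Nf : List ℕ → ℕ) (p : List ℕ → ℝ) (hp : IsProbVec (glIdx Nf 2) p) :
    IsProbVec (glIdx Nf 1) (glMarg Nf p) := by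
  constructor
  · intro u _
    exact Finset.sum_nonneg fun v hv => hp.1 v (Finset.mem_filter.1 hv).1
  · have := gl_marg_sum Nf p (fun _ => 1)
    simp only [mul_one] at this
    rw [this, hp.2]

theorem gl_cont (Nf : List ℕ → ℕ) (lam : List ℕ → ℝ) (K : Set (List ℕ → ℝ))
    (h1 : ∀ p ∈ K, glLyap lam (glIdx Nf 2) 1 p ≠ 0)
    (h2 : ∀ p ∈ K, glLyap lam (glIdx Nf 2) 2 p ≠ 0) : ContinuousOn (glF Nf lam) K := by
  have hm : ∀ u, Continuous (fun p : List ℕ → ℝ => glMarg Nf p u) := by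
    intro u; unfold glMarg; fun_prop
  have hl : ∀ l, Continuous (fun p : List ℕ → ℝ => glLyap lam (glIdx Nf 2) l p) := by
    intro l; unfold glLyap; fun_prop
  have he : Continuous (fun p : List ℕ → ℝ => glEnt (glIdx Nf 2) p) := by
    unfold glEnt
    refine Continuous.neg (continuous_finsetSum _ fun i _ => ?_)
    exact Real.continuous_mul_log.comp (continuous_apply i)
  have he1 : Continuous (fun p : List ℕ → ℝ => glEnt (glIdx Nf 1) (glMarg Nf p)) := by
    unfold glEnt
    refine Continuous.neg (continuous_finsetSum _ fun i _ => ?_)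
    exact Real.continuous_mul_log.comp (hm i)
  unfold glF
  simp only [gl_lyap_marg]
  exact (he.continuousOn.div (hl 2).continuousOn h2).add
    ((continuousOn_const.sub ((hl 1).continuousOn.div (hl 2).continuousOn h2)).mul
      (he1.continuousOn.div (hl 1).continuousOn h1))

/-- For `d = 2` GL carpets (with the coordinate ordering condition),
the Gatzouras–Lalley variational formula for the Hausdorff dimension equals the box
dimension `s_2` if and only if the uniform fibre condition holds. -/
theorem hausdorff_eq_box_iff_uniform_fibres
    (Nf : List ℕ → ℕ) (hN : 2 ≤ Nf [])
    (hNf : ∀ n < 2, ∀ u ∈ glIdx Nf n, 1 ≤ Nf u)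
    (lam : List ℕ → ℝ)
    (hlam : ∀ n, 1 ≤ n → n ≤ 2 → ∀ i ∈ glIdx Nf n, lam i ∈ Set.Ioo (0:ℝ) 1)
    (horder : ∀ i ∈ glIdx Nf 2, lam (i.take 2) < lam (i.take 1))
    (s : ℕ → ℝ) (hs0 : s 0 = 0)
    (hs : ∀ n, 1 ≤ n → n ≤ 2 →
      ∑ i ∈ glIdx Nf n, ∏ ℓ ∈ Finset.Icc 1 n, lam (i.take ℓ) ^ (s ℓ - s (ℓ - 1)) = 1) :
    sSup {x : ℝ | ∃ p : List ℕ → ℝ, IsProbVec (glIdx Nf 2) p ∧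
        x = glEnt (glIdx Nf 2) p / glLyap lam (glIdx Nf 2) 2 p +
          (1 - glLyap lam (glIdx Nf 2) 1 p / glLyap lam (glIdx Nf 2) 2 p) *
            (glEnt (glIdx Nf 1) (glMarg Nf p) /
              glLyap lam (glIdx Nf 1) 1 (glMarg Nf p))} = s 2 ↔
      ∀ u ∈ glIdx Nf 1,
        ∑ v ∈ (glIdx Nf 2).filter (fun v => v.take 1 = u), lam v ^ (s 2 - s 1) = 1 := by
  set I2 := glIdx Nf 2 with hI2
  set I1 := glIdx Nf 1 with hI1
  have hl1 : ∀ u ∈ I1, lam u ∈ Set.Ioo (0:ℝ) 1 := hlam 1 le_rfl (by norm_num)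
  have hl2 : ∀ v ∈ I2, lam v ∈ Set.Ioo (0:ℝ) 1 := hlam 2 (by norm_num) le_rfl
  have hl21 : ∀ v ∈ I2, lam (v.take 1) ∈ Set.Ioo (0:ℝ) 1 := fun v hv => hl1 _ (gl_idx2 Nf v hv).1
  have hl22 : ∀ v ∈ I2, lam (v.take 2) ∈ Set.Ioo (0:ℝ) 1 := fun v hv => by
    rw [(gl_idx2 Nf v hv).2]; exact hl2 v hv
  let w1 : List ℕ → ℝ := fun u => lam u ^ s 1
  let w2 : List ℕ → ℝ := fun v => lam (v.take 1) ^ s 1 * lam v ^ (s 2 - s 1)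
  have hw1 : ∑ u ∈ I1, w1 u = 1 := by
    rw [← hs 1 le_rfl (by norm_num)]
    refine Finset.sum_congr rfl fun u hu => ?_
    simp [w1, hs0, gl_idx1 Nf u hu]
  have hw2 : ∑ v ∈ I2, w2 v = 1 := by
    rw [← hs 2 (by norm_num) le_rfl]
    refine Finset.sum_congr rfl fun v hv => ?_
    have : Finset.Icc 1 2 = {1, 2} := by decide
    rw [this, Finset.prod_pair (by norm_num)]
    simp [w2, hs0, (gl_idx2 Nf v hv).2]
  have hw1p : ∀ u ∈ I1, 0 < w1 u := fun u hu => Real.rpow_pos_of_pos (hl1 u hu).1 _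
  have hw2p : ∀ v ∈ I2, 0 < w2 v := fun v hv =>
    mul_pos (Real.rpow_pos_of_pos (hl21 v hv).1 _) (Real.rpow_pos_of_pos (hl2 v hv).1 _)
  have hw2prob : IsProbVec I2 w2 := ⟨fun i hi => (hw2p i hi).le, hw2⟩
  have hc1 : ∀ p, -∑ u ∈ I1, glMarg Nf p u * Real.log (w1 u) = s 1 * glLyap lam I2 1 p := by
    intro p
    rw [← gl_lyap_marg, glLyap, ← hI1, mul_neg, Finset.mul_sum]
    congr 1
    refine Finset.sum_congr rfl fun u hu => ?_
    rw [gl_idx1 Nf u hu, Real.log_rpow (hl1 u hu).1]; ring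
  have hc2 : ∀ p, -∑ v ∈ I2, p v * Real.log (w2 v) =
      s 1 * glLyap lam I2 1 p + (s 2 - s 1) * glLyap lam I2 2 p := by
    intro p
    rw [glLyap, glLyap, mul_neg, mul_neg, Finset.mul_sum, Finset.mul_sum, ← neg_add,
      ← Finset.sum_add_distrib]
    congr 1
    refine Finset.sum_congr rfl fun v hv => ?_
    rw [(gl_idx2 Nf v hv).2, Real.log_mul (Real.rpow_pos_of_pos (hl21 v hv).1 _).ne'
      (Real.rpow_pos_of_pos (hl2 v hv).1 _).ne', Real.log_rpow (hl21 v hv).1,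
      Real.log_rpow (hl2 v hv).1]
    ring
  -- deficit identity
  have hdef : ∀ p, IsProbVec I2 p → s 2 - glF Nf lam p =
      ((s 1 * glLyap lam I2 1 p + (s 2 - s 1) * glLyap lam I2 2 p) - glEnt I2 p)
        / glLyap lam I2 2 p +
      (1 - glLyap lam I2 1 p / glLyap lam I2 2 p) *
        ((s 1 * glLyap lam I2 1 p - glEnt I1 (glMarg Nf p)) / glLyap lam I2 1 p) := by
    intro p hp
    have a1 := (gl_lyap_pos lam I2 1 p hp hl21).ne'
    have a2 := (gl_lyap_pos lam I2 2 p hp hl22).ne'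
    rw [glF, gl_lyap_marg, ← hI2, ← hI1]
    field_simp
    ring
  have hcoef : ∀ p, IsProbVec I2 p → 0 < 1 - glLyap lam I2 1 p / glLyap lam I2 2 p := by
    intro p hp
    have a2 := gl_lyap_pos lam I2 2 p hp hl22
    have := gl_lyap_lt lam I2 p hp (fun i hi => (hl22 i hi).1) horder
    rw [sub_pos, div_lt_one a2]
    exact this
  have hg2 : ∀ p, IsProbVec I2 p → _ := fun p hp => gl_gibbs I2 p w2 hp.1 hp.2 hw2p hw2
  have hg1 : ∀ p, IsProbVec I2 p → _ := fun p hp =>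
    gl_gibbs I1 (glMarg Nf p) w1 (gl_marg_prob Nf p hp).1 (gl_marg_prob Nf p hp).2 hw1p hw1
  simp only [hc1] at hg1
  simp only [hc2] at hg2
  have hle : ∀ p, IsProbVec I2 p → glF Nf lam p ≤ s 2 := by
    intro p hp
    have a1 := gl_lyap_pos lam I2 1 p hp hl21
    have a2 := gl_lyap_pos lam I2 2 p hp hl22
    have t1 := div_nonneg (sub_nonneg.2 (hg2 p hp).1) a2.le
    have t2 := mul_nonneg (hcoef p hp).le (div_nonneg (sub_nonneg.2 (hg1 p hp).1) a1.le)
    linarith [hdef p hp]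
  have hmw : ∀ u ∈ I1, glMarg Nf w2 u =
      w1 u * ∑ v ∈ I2.filter (fun v => v.take 1 = u), lam v ^ (s 2 - s 1) := by
    intro u _
    rw [glMarg, Finset.mul_sum]
    refine Finset.sum_congr rfl fun v hv => ?_
    simp only [w1, w2, (Finset.mem_filter.1 hv).2]
  change sSup {x : ℝ | ∃ p : List ℕ → ℝ, IsProbVec I2 p ∧ x = glF Nf lam p} = s 2 ↔ _
  constructor
  · intro hsup
    let K : Set (List ℕ → ℝ) :=
      (Set.univ.pi fun _ => Set.Icc (0:ℝ) 1) ∩ {p | ∑ i ∈ I2, p i = 1}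
    have hK : IsCompact K := (isCompact_univ_pi fun _ => isCompact_Icc).inter_right
      (isClosed_eq (by fun_prop) continuous_const)
    have hKp : ∀ p ∈ K, IsProbVec I2 p := fun p hp => ⟨fun i _ => (hp.1 i trivial).1, hp.2⟩
    have hset : {x : ℝ | ∃ p : List ℕ → ℝ, IsProbVec I2 p ∧ x = glF Nf lam p} =
        glF Nf lam '' K := by
      ext x
      constructor
      · rintro ⟨p, hp, rfl⟩
        refine ⟨fun i => if i ∈ I2 then p i else 0, ⟨fun i _ => ?_, ?_⟩, ?_⟩
        · by_cases hi : i ∈ I2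
          · simp only [hi, if_true]
            exact ⟨hp.1 i hi, hp.2 ▸ Finset.single_le_sum hp.1 hi⟩
          · simp [hi]
        · change ∑ i ∈ I2, (if i ∈ I2 then p i else 0) = 1
          rw [← hp.2]
          exact Finset.sum_congr rfl fun i hi => if_pos hi
        · exact glF_congr Nf lam _ _ fun i hi => if_pos hi
      · rintro ⟨p, hp, rfl⟩
        exact ⟨p, hKp p hp, rfl⟩
    have hne : (glF Nf lam '' K).Nonempty := hset ▸ ⟨_, w2, hw2prob, rfl⟩
    have hcont : ContinuousOn (glF Nf lam) K := gl_cont Nf lam K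
      (fun p hp => (gl_lyap_pos lam I2 1 p (hKp p hp) hl21).ne')
      (fun p hp => (gl_lyap_pos lam I2 2 p (hKp p hp) hl22).ne')
    have hmem := (hK.image_of_continuousOn hcont).sSup_mem hne
    rw [← hset, hsup] at hmem
    obtain ⟨p, hp, hpe⟩ := hmem
    have a1 := gl_lyap_pos lam I2 1 p hp hl21
    have a2 := gl_lyap_pos lam I2 2 p hp hl22
    have t1 := div_nonneg (sub_nonneg.2 (hg2 p hp).1) a2.le
    have t2' := div_nonneg (sub_nonneg.2 (hg1 p hp).1) a1.le
    have t2 := mul_nonneg (hcoef p hp).le t2'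
    have hd := hdef p hp
    have z1 := (div_eq_zero_iff.1 (le_antisymm (by linarith) t1)).resolve_right a2.ne'
    have z2 := (div_eq_zero_iff.1 ((mul_eq_zero.1 (le_antisymm (by linarith) t2)).resolve_left
      (hcoef p hp).ne')).resolve_right a1.ne'
    have e2 := (hg2 p hp).2 (by linarith)
    have e1 := (hg1 p hp).2 (by linarith)
    intro u hu
    have := e1 u hu
    rw [gl_marg_congr Nf p w2 e2, hmw u hu] at this
    exact mul_left_cancel₀ (hw1p u hu).ne' (by rw [this, mul_one])
  · intro hu
    have hm : ∀ u ∈ I1, glMarg Nf w2 u = w1 u := fun u h => by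
      rw [hmw u h, hu u h, mul_one]
    have hE2 : glEnt I2 w2 = s 1 * glLyap lam I2 1 w2 + (s 2 - s 1) * glLyap lam I2 2 w2 :=
      hc2 w2
    have hE1 : glEnt I1 (glMarg Nf w2) = s 1 * glLyap lam I2 1 w2 := by
      rw [← hc1 w2, glEnt]
      congr 1
      exact Finset.sum_congr rfl fun u h => by rw [hm u h]
    have hval : s 2 = glF Nf lam w2 := by
      have := hdef w2 hw2prob
      rw [hE1, hE2] at this
      simp at this
      linarith
    apply IsGreatest.csSup_eq
    refine ⟨⟨w2, hw2prob, hval⟩, ?_⟩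
    rintro x ⟨p, hp, rfl⟩
    exact hle p hp
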